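/- Let K₁ and K₂ be nonempty compact Hausdorff topological spaces and let f₁, f₂ ∈ C(K₁, ℂ) and g₁, g₂ ∈ C(K₂, ℂ). If the function F₁(s,t) = f₁(s)·g₁(t) is strongly Birkhoff-James orthogonal in C(K₁ × K₂, ℂ) to F₂(s,t) = f₂(s)·g₂(t) — meaning ‖F₁ + F₂·h‖_∞ ≥ ‖F₁‖_∞ for every h ∈ C(K₁ × K₂, ℂ) — then f₁ ⊥_BJ f₂ in C(K₁, ℂ) or g₁ ⊥_BJ g₂ in C(K₂, ℂ) (ordinary Birkhoff-James orthogonality). -/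

import Mathlib

theorem exists_norm_att {K : Type*} [TopologicalSpace K] [CompactSpace K] [Nonempty K]
    (f : C(K, ℂ)) : ∃ x, ‖f x‖ = ‖f‖ := by
  obtain ⟨x, -, hx⟩ := isCompact_univ.exists_isMaxOn (Set.univ_nonempty (α := K))
    (f := fun x => ‖f x‖) (by fun_prop)
  refine ⟨x, le_antisymm (f.norm_coe_le_norm x) ?_⟩
  exact (ContinuousMap.norm_le _ (norm_nonneg _)).2 fun y => hx (Set.mem_univ y)

theorem bj_of_zero {K : Type*} [TopologicalSpace K] [CompactSpace K]
    (f g : C(K, ℂ)) (x : K) (hx : ‖f‖ ≤ ‖f x‖) (hg : g x = 0) (α : ℂ) :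
    ‖f + α • g‖ ≥ ‖f‖ := by
  have h := (f + α • g).norm_coe_le_norm x
  simp [hg] at h
  exact hx.trans h

/-- For nonempty compact Hausdorff spaces `K₁, K₂` and
`f₁, f₂ ∈ C(K₁, ℂ)`, `g₁, g₂ ∈ C(K₂, ℂ)`, if the function `(s,t) ↦ f₁ s * g₁ t` is
strongly Birkhoff-James orthogonal to `(s,t) ↦ f₂ s * g₂ t` in the C*-algebra
`C(K₁ × K₂, ℂ)`, then `f₁ ⊥_BJ f₂` in `C(K₁, ℂ)` or `g₁ ⊥_BJ g₂` in `C(K₂, ℂ)`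
(ordinary Birkhoff-James orthogonality). -/
theorem stmt11
    {K₁ K₂ : Type*} [TopologicalSpace K₁] [CompactSpace K₁] [T2Space K₁] [Nonempty K₁]
    [TopologicalSpace K₂] [CompactSpace K₂] [T2Space K₂] [Nonempty K₂]
    (f₁ f₂ : C(K₁, ℂ)) (g₁ g₂ : C(K₂, ℂ))
    (hs : ∀ h : C(K₁ × K₂, ℂ),
      ‖(f₁.comp ContinuousMap.fst * g₁.comp ContinuousMap.snd) +
          (f₂.comp ContinuousMap.fst * g₂.comp ContinuousMap.snd) * h‖ ≥
        ‖f₁.comp ContinuousMap.fst * g₁.comp ContinuousMap.snd‖) :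
    (∀ α : ℂ, ‖f₁ + α • f₂‖ ≥ ‖f₁‖) ∨ (∀ α : ℂ, ‖g₁ + α • g₂‖ ≥ ‖g₁‖) := by
  by_cases hf : f₁ = 0
  · left; intro α; simp [hf]
  by_cases hg : g₁ = 0
  · right; intro α; simp [hg]
  have hf' := norm_pos_iff.2 hf
  have hg' := norm_pos_iff.2 hg
  set F₁ : C(K₁ × K₂, ℂ) := f₁.comp ContinuousMap.fst * g₁.comp ContinuousMap.snd with hF₁
  set F₂ : C(K₁ × K₂, ℂ) := f₂.comp ContinuousMap.fst * g₂.comp ContinuousMap.snd with hF₂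
  have hlow : ‖f₁‖ * ‖g₁‖ ≤ ‖F₁‖ := by
    obtain ⟨s, h1⟩ := exists_norm_att f₁
    obtain ⟨t, h2⟩ := exists_norm_att g₁
    have := F₁.norm_coe_le_norm (s, t)
    simpa [hF₁, h1, h2] using this
  set c : ℝ := 1 / (‖F₂‖ ^ 2 + 1) with hc
  have hc0 : 0 < c := by positivity
  have key := hs (-((c : ℂ) • (star F₂ * F₁)))
  obtain ⟨⟨s, t⟩, hst⟩ := exists_norm_att (F₁ + F₂ * (-((c : ℂ) • (star F₂ * F₁))))
  rw [← hst] at key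
  have e : (F₁ + F₂ * (-((c : ℂ) • (star F₂ * F₁)))) (s, t)
      = ((1 - c * ‖F₂ (s, t)‖ ^ 2 : ℝ) : ℂ) * F₁ (s, t) := by
    have : F₂ (s, t) * star (F₂ (s, t)) = ((‖F₂ (s, t)‖ ^ 2 : ℝ) : ℂ) := by
      have := Complex.mul_conj' (F₂ (s, t))
      push_cast
      exact this
    simp only [ContinuousMap.add_apply, ContinuousMap.mul_apply, ContinuousMap.neg_apply,
      ContinuousMap.smul_apply, ContinuousMap.star_apply, smul_eq_mul]
    rw [Complex.ofReal_sub, Complex.ofReal_mul, ← this]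
    push_cast
    ring
  have hF2 := F₂.norm_coe_le_norm (s, t)
  have hle : c * ‖F₂ (s, t)‖ ^ 2 ≤ 1 := by
    rw [hc, div_mul_eq_mul_div, one_mul, div_le_one (by positivity)]
    have := pow_le_pow_left₀ (norm_nonneg _) hF2 2
    linarith
  rw [e, norm_mul, Complex.norm_real, Real.norm_of_nonneg (by linarith)] at key
  have hpos : 0 < ‖f₁‖ * ‖g₁‖ := by positivity
  have hF1 := F₁.norm_coe_le_norm (s, t)
  have hx0 : 0 ≤ c * ‖F₂ (s, t)‖ ^ 2 := by positivity
  have hge : ‖F₁‖ ≤ ‖F₁ (s, t)‖ := by nlinarith [norm_nonneg (F₁ (s, t))]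
  have hz : F₂ (s, t) = 0 := by
    by_contra hne
    have : 0 < c * ‖F₂ (s, t)‖ ^ 2 := by have := norm_pos_iff.2 hne; positivity
    nlinarith
  have hfg : ‖F₁ (s, t)‖ = ‖f₁ s‖ * ‖g₁ t‖ := by simp [hF₁]
  have a1 := f₁.norm_coe_le_norm s
  have a2 := g₁.norm_coe_le_norm t
  have hp : ‖f₁‖ * ‖g₁‖ ≤ ‖f₁ s‖ * ‖g₁ t‖ := by linarith
  have b1 : ‖f₁‖ ≤ ‖f₁ s‖ := by
    by_contra! hlt
    nlinarith [norm_nonneg (f₁ s)]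
  have b2 : ‖g₁‖ ≤ ‖g₁ t‖ := by
    by_contra! hlt
    nlinarith [norm_nonneg (g₁ t)]
  have hz' : f₂ s * g₂ t = 0 := by simpa [hF₂] using hz
  rcases mul_eq_zero.1 hz' with h | h
  · exact Or.inl (bj_of_zero f₁ f₂ s b1 h)
  · exact Or.inr (bj_of_zero g₁ g₂ t b2 h)
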